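/- Sequential gentle measurement. Let H be a finite-dimensional complex inner product space, let t ≥ 0, let P_1,…,P_t : H → H be orthogonal projections, let U_1,…,U_t : H → H be unitaries, and let ψ ∈ H be a unit vector. Then ‖U_t⋯U_1 ψ − P_t U_t P_{t−1} U_{t−1} ⋯ P_1 U_1 ψ‖ ≤ t·√(1 − ‖P_t U_t P_{t−1} U_{t−1} ⋯ P_1 U_1 ψ‖²). -/

import Mathlib

/-! With `φ n` the state after `n` projected steps, one more step adds to the error at most
`‖U φ n - P U φ n‖ = √(‖φ n‖² - ‖φ (n+1)‖²)` by Pythagoras, because the unitary preserves the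
error already accumulated. Since `‖φ n‖` decreases and starts at `1`, each of the `t` increments
is at most `√(1 - ‖φ t‖²)`, and induction on `t` sums them. -/

open scoped InnerProductSpace

/-- Iterated composition: `chainLM F t = F (t-1) ∘ₗ ⋯ ∘ₗ F 0`, with `F 0` applied first. -/
def chainLM {H : Type*} [AddCommGroup H] [Module ℂ H]
    (F : ℕ → (H →ₗ[ℂ] H)) : ℕ → (H →ₗ[ℂ] H)
  | 0 => LinearMap.id
  | (n + 1) => F n ∘ₗ chainLM F n

/-- Pythagoras for an orthogonal projection. -/
lemma norm_sq_proj_add {H : Type*} [NormedAddCommGroup H] [InnerProductSpace ℂ H]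
    (P : H →ₗ[ℂ] H) (hP : P ∘ₗ P = P) (hsa : ∀ x y : H, ⟪P x, y⟫_ℂ = ⟪x, P y⟫_ℂ) (x : H) :
    ‖x‖ ^ 2 = ‖P x‖ ^ 2 + ‖x - P x‖ ^ 2 := by
  have hPP : P (P x) = P x := LinearMap.congr_fun hP x
  have horth : ⟪P x, x - P x⟫_ℂ = 0 := by
    rw [hsa, map_sub, hPP, sub_self, inner_zero_right]
  have h := norm_add_sq_eq_norm_sq_add_norm_sq_of_inner_eq_zero (P x) (x - P x) horth
  rw [add_sub_cancel] at h
  simpa only [sq] using h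

/-- **Sequential gentle measurement.** For orthogonal projections `P 0, …, P (t-1)`,
unitaries `U 0, …, U (t-1)` and a unit vector `ψ`,
`‖U_t⋯U_1 ψ − P_t U_t ⋯ P_1 U_1 ψ‖ ≤ t·√(1 − ‖P_t U_t ⋯ P_1 U_1 ψ‖²)`. -/
theorem sequential_gentle_measurement {H : Type*} [NormedAddCommGroup H]
    [InnerProductSpace ℂ H] [FiniteDimensional ℂ H]
    (t : ℕ) (P U : ℕ → (H →ₗ[ℂ] H))
    (hPidem : ∀ i < t, P i ∘ₗ P i = P i)
    (hPsa : ∀ i < t, ∀ x y : H, ⟪P i x, y⟫_ℂ = ⟪x, P i y⟫_ℂ)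
    (hUiso : ∀ i < t, ∀ x : H, ‖U i x‖ = ‖x‖)
    (hUbij : ∀ i < t, Function.Bijective (U i))
    (ψ : H) (hψ : ‖ψ‖ = 1) :
    ‖chainLM U t ψ - chainLM (fun i => P i ∘ₗ U i) t ψ‖ ≤
      t * Real.sqrt (1 - ‖chainLM (fun i => P i ∘ₗ U i) t ψ‖ ^ 2) := by
  -- The bound `‖φ t‖ ≤ 1` is carried along to bound the increments.
  suffices h : ‖chainLM (fun i => P i ∘ₗ U i) t ψ‖ ^ 2 ≤ 1 ∧
      ‖chainLM U t ψ - chainLM (fun i => P i ∘ₗ U i) t ψ‖ ≤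
        t * Real.sqrt (1 - ‖chainLM (fun i => P i ∘ₗ U i) t ψ‖ ^ 2) from h.2
  induction t with
  | zero => simp [chainLM, hψ]
  | succ n ih =>
    obtain ⟨h1, h2⟩ := ih (fun i hi => hPidem i (by omega)) (fun i hi => hPsa i (by omega))
      (fun i hi => hUiso i (by omega)) (fun i hi => hUbij i (by omega))
    simp only [chainLM, LinearMap.comp_apply]
    set a := chainLM U n ψ
    set φ := chainLM (fun i => P i ∘ₗ U i) n ψ
    have hpyth := norm_sq_proj_add (P n) (hPidem n (by omega)) (hPsa n (by omega)) (U n φ)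
    rw [hUiso n (by omega)] at hpyth
    have hstep : ‖U n φ - P n (U n φ)‖ ≤ Real.sqrt (1 - ‖P n (U n φ)‖ ^ 2) :=
      Real.le_sqrt_of_sq_le (by linarith)
    have hmono : Real.sqrt (1 - ‖φ‖ ^ 2) ≤ Real.sqrt (1 - ‖P n (U n φ)‖ ^ 2) :=
      Real.sqrt_le_sqrt (by nlinarith [sq_nonneg ‖U n φ - P n (U n φ)‖])
    refine ⟨by nlinarith [sq_nonneg ‖U n φ - P n (U n φ)‖], ?_⟩
    calc ‖U n a - P n (U n φ)‖
        ≤ ‖U n a - U n φ‖ + ‖U n φ - P n (U n φ)‖ := norm_sub_le_norm_sub_add_norm_sub _ _ _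
      _ = ‖a - φ‖ + ‖U n φ - P n (U n φ)‖ := by rw [← map_sub, hUiso n (by omega)]
      _ ≤ n * Real.sqrt (1 - ‖P n (U n φ)‖ ^ 2) + Real.sqrt (1 - ‖P n (U n φ)‖ ^ 2) :=
          add_le_add (h2.trans (mul_le_mul_of_nonneg_left hmono n.cast_nonneg)) hstep
      _ = ((n + 1 : ℕ) : ℝ) * Real.sqrt (1 - ‖P n (U n φ)‖ ^ 2) := by push_cast; ring
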